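/- arXiv:math/0305245 — 2 statements merged into one kernel-verified Lean document; each statement's English description precedes it below -/
import Mathlib

section
/- Let ω_r be a minuscule fundamental weight, let w_0 be the longest element of W, let w_0^{ω_r} be the longest element of the stabilizer of ω_r in W, and set u_r = w_0 w_0^{ω_r}. Then u_r^{−1}(ρ) = ρ − h·ω_r; in particular u_r^{−1}(ρ) ≡ ρ + ω_r modulo (1+h)P, so ρ and ρ + ω_r lie in the same W-orbit of P/(1+h)P. -/
noncomputable section

open scoped RealInnerProductSpace BigOperators

/-- Euclidean space `ℝ^n`, the ambient space of the root system. -/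
abbrev Vn (n : ℕ) := EuclideanSpace ℝ (Fin n)

/-- The coroot `α^∨ = 2α/(α,α)` of a vector `α`. -/
def coroot {n : ℕ} (α : Vn n) : Vn n := (2 / ⟪α, α⟫) • α

/-- The reflection `s_α` applied to `β`: `β − (β, α^∨)·α`. -/
def reflVec {n : ℕ} (α β : Vn n) : Vn n := β - (2 * ⟪β, α⟫ / ⟪α, α⟫) • α

/-- An irreducible reduced crystallographic root system of rank `n` in `ℝ^n`, together
with a fixed base of simple roots `α_1,…,α_n`, the corresponding set of positive roots,
the fundamental weights `ω_1,…,ω_n` and the highest short root `θ`. -/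
structure RootSystemData (n : ℕ) where
  /-- the set of roots -/
  R : Finset (Vn n)
  /-- the set of positive roots -/
  Rplus : Finset (Vn n)
  /-- the simple roots `α_1,…,α_n` -/
  sroot : Fin n → Vn n
  /-- the fundamental weights `ω_1,…,ω_n` -/
  fw : Fin n → Vn n
  /-- the highest short root `θ` -/
  hst : Vn n
  root_ne_zero : ∀ α ∈ R, α ≠ (0 : Vn n)
  span_top : Submodule.span ℝ (R : Set (Vn n)) = ⊤
  reflect_mem : ∀ α ∈ R, ∀ β ∈ R, reflVec α β ∈ R
  crystallographic : ∀ α ∈ R, ∀ β ∈ R, ∃ z : ℤ, 2 * ⟪β, α⟫ / ⟪α, α⟫ = (z : ℝ)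
  reduced : ∀ α ∈ R, ∀ c : ℝ, c • α ∈ R → c = 1 ∨ c = -1
  irreducible : ∀ S : Set (Vn n), (∃ α ∈ R, α ∈ S) →
    (∀ α ∈ R, ∀ β ∈ R, α ∈ S → ⟪α, β⟫ ≠ 0 → β ∈ S) → ∀ β ∈ R, β ∈ S
  sroot_mem : ∀ i, sroot i ∈ Rplus
  pos_sub : Rplus ⊆ R
  pos_or : ∀ α ∈ R, α ∈ Rplus ∨ -α ∈ Rplus
  pos_not_and : ∀ α ∈ Rplus, -α ∉ Rplus
  pos_decomp : ∀ α ∈ Rplus, ∃ c : Fin n → ℕ, α = ∑ i, (c i : ℝ) • sroot i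
  fw_pair : ∀ i j, ⟪fw i, coroot (sroot j)⟫ = if i = j then 1 else 0
  theta_mem : hst ∈ Rplus
  theta_short : ∀ α ∈ R, ⟪hst, hst⟫ ≤ ⟪α, α⟫
  theta_highest : ∀ α ∈ R, ∃ c : Fin n → ℝ, (∀ i, 0 ≤ c i) ∧
    coroot hst - coroot α = ∑ i, c i • coroot (sroot i)

namespace RootSystemData

variable {n : ℕ} (D : RootSystemData n)

/-- The weight lattice `P = ⊕_i ℤ·ω_i`. -/
def P : Submodule ℤ (Vn n) := Submodule.span ℤ (Set.range D.fw)

/-- `ρ = ω_1 + ⋯ + ω_n` (the half-sum of the positive roots). -/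
def rho : Vn n := ∑ i, D.fw i

/-- The Coxeter number `h = 1 + (ρ, θ^∨)`. -/
def h : ℝ := 1 + ⟪D.rho, coroot D.hst⟫

/-- The Weyl group `W`, as the subgroup of `GL(ℝ^n)` generated by the reflections
`s_α`, `α ∈ R`. -/
def Weyl : Subgroup ((Vn n) ≃ₗ[ℝ] (Vn n)) :=
  Subgroup.closure { w | ∃ α ∈ D.R, ∀ v, w v = reflVec α v }

/-- `ω_r` is a minuscule (fundamental) weight: `(ω_r, α^∨) ≤ 1` for all `α ∈ R_+`. -/
def Minuscule (r : Fin n) : Prop := ∀ α ∈ D.Rplus, ⟪D.fw r, coroot α⟫ ≤ 1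

end RootSystemData

namespace RootSystemData

variable {n : ℕ} (D : RootSystemData n)

lemma reflVec_reflVec {α : Vn n} (hα : α ≠ 0) (v : Vn n) : reflVec α (reflVec α v) = v := by
  have h0 : (⟪α, α⟫ : ℝ) ≠ 0 := inner_self_ne_zero.mpr hα
  unfold reflVec
  rw [inner_sub_left, real_inner_smul_left, sub_sub, ← add_smul]
  have : 2 * ⟪v, α⟫ / ⟪α, α⟫ + 2 * (⟪v, α⟫ - 2 * ⟪v, α⟫ / ⟪α, α⟫ * ⟪α, α⟫) / ⟪α, α⟫ = (0 : ℝ) := by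
    field_simp
    ring
  rw [this, zero_smul, sub_zero]

lemma reflVec_inner {α : Vn n} (hα : α ≠ 0) (v w : Vn n) :
    (⟪reflVec α v, reflVec α w⟫ : ℝ) = ⟪v, w⟫ := by
  have h0 : (⟪α, α⟫ : ℝ) ≠ 0 := inner_self_ne_zero.mpr hα
  unfold reflVec
  simp only [inner_sub_left, inner_sub_right, real_inner_smul_left, real_inner_smul_right]
  rw [real_inner_comm w α]
  field_simp
  ring

lemma weyl_props {w : Vn n ≃ₗ[ℝ] Vn n} (hw : w ∈ D.Weyl) :
    (∀ x y, (⟪w x, w y⟫ : ℝ) = ⟪x, y⟫) ∧ (∀ α, w α ∈ D.R ↔ α ∈ D.R) := by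
  unfold Weyl at hw
  induction hw using Subgroup.closure_induction with
  | mem w hw =>
    obtain ⟨α, hα, h⟩ := hw
    have hα0 := D.root_ne_zero α hα
    refine ⟨fun x y => by rw [h, h, reflVec_inner hα0], fun β => ⟨fun hb => ?_, fun hb => ?_⟩⟩
    · rw [h] at hb
      have := D.reflect_mem α hα _ hb
      rwa [reflVec_reflVec hα0] at this
    · rw [h]; exact D.reflect_mem α hα _ hb
  | one => exact ⟨fun x y => rfl, fun α => Iff.rfl⟩
  | mul a b _ _ ha hb =>
    refine ⟨fun x y => ?_, fun α => ?_⟩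
    · rw [LinearEquiv.mul_apply, LinearEquiv.mul_apply, ha.1, hb.1]
    · rw [LinearEquiv.mul_apply, ha.2, hb.2]
  | inv a _ ha =>
    have key : ∀ x, a (a⁻¹ x) = x := fun x => a.apply_symm_apply x
    refine ⟨fun x y => ?_, fun α => ?_⟩
    · rw [← ha.1, key, key]
    · rw [← ha.2, key]

lemma sroot_mem_R (i : Fin n) : D.sroot i ∈ D.R := D.pos_sub (D.sroot_mem i)

lemma sroot_norm_pos (i : Fin n) : 0 < (⟪D.sroot i, D.sroot i⟫ : ℝ) :=
  real_inner_self_pos.mpr (D.root_ne_zero _ (D.sroot_mem_R i))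

lemma fw_sroot (i j : Fin n) :
    (⟪D.fw i, D.sroot j⟫ : ℝ) = if i = j then ⟪D.sroot j, D.sroot j⟫ / 2 else 0 := by
  have h := D.fw_pair i j
  have h0 := D.sroot_norm_pos j
  unfold coroot at h
  rw [real_inner_smul_right] at h
  split_ifs at h ⊢
  · field_simp at h ⊢
    linarith
  · have : (2 / ⟪D.sroot j, D.sroot j⟫ : ℝ) ≠ 0 := by positivity
    exact (mul_eq_zero.mp h).resolve_left this

lemma rho_sroot (j : Fin n) : (⟪D.rho, coroot (D.sroot j)⟫ : ℝ) = 1 := by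
  unfold rho
  rw [sum_inner]
  simp [D.fw_pair]

/-- vectors are determined by pairings with simple coroots -/
lemma ext_coroot {v w : Vn n}
    (h : ∀ j, (⟪v, coroot (D.sroot j)⟫ : ℝ) = ⟪w, coroot (D.sroot j)⟫) : v = w := by
  rw [← sub_eq_zero]
  have h1 : ∀ j, (⟪v - w, D.sroot j⟫ : ℝ) = 0 := by
    intro j
    have h2 := h j
    have h0 := D.sroot_norm_pos j
    unfold coroot at h2
    rw [real_inner_smul_right, real_inner_smul_right] at h2
    have : (2 / ⟪D.sroot j, D.sroot j⟫ : ℝ) ≠ 0 := by positivity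
    rw [inner_sub_left, mul_left_cancel₀ this h2, sub_self]
  have hp : ∀ α ∈ D.Rplus, (⟪v - w, α⟫ : ℝ) = 0 := by
    intro α hα
    obtain ⟨c, hc⟩ := D.pos_decomp α hα
    rw [hc, inner_sum]
    exact Finset.sum_eq_zero fun i _ => by rw [real_inner_smul_right, h1, mul_zero]
  have hR : ∀ x ∈ Submodule.span ℝ (D.R : Set (Vn n)), (⟪v - w, x⟫ : ℝ) = 0 := by
    intro x hx
    induction hx using Submodule.span_induction with
    | mem x hx =>
      rcases D.pos_or x hx with h | h
      · exact hp x h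
      · have := hp _ h
        rwa [inner_neg_right, neg_eq_zero] at this
    | zero => exact inner_zero_right _
    | add x y _ _ hx hy => rw [inner_add_right, hx, hy, add_zero]
    | smul a x _ hx => rw [real_inner_smul_right, hx, mul_zero]
  have := hR (v - w) (by rw [D.span_top]; trivial)
  exact inner_self_eq_zero.mp this

/-- height functional -/
def ht : Vn n →ₗ[ℝ] ℝ := ∑ i, (2 / ⟪D.sroot i, D.sroot i⟫ : ℝ) • (innerₛₗ ℝ (D.fw i))

lemma ht_sroot (j : Fin n) : D.ht (D.sroot j) = 1 := by
  have h0 := D.sroot_norm_pos j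
  unfold ht
  simp only [LinearMap.sum_apply, LinearMap.smul_apply, innerₛₗ_apply_apply, smul_eq_mul,
    D.fw_sroot, mul_ite, mul_zero]
  rw [Finset.sum_ite_eq' Finset.univ j, if_pos (Finset.mem_univ j)]
  field_simp

lemma ht_sum (c : Fin n → ℕ) : D.ht (∑ i, (c i : ℝ) • D.sroot i) = ((∑ i, c i : ℕ) : ℝ) := by
  simp [map_sum, D.ht_sroot]

lemma one_le_ht {α : Vn n} (hα : α ∈ D.Rplus) : 1 ≤ D.ht α := by
  obtain ⟨c, hc⟩ := D.pos_decomp α hα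
  rw [hc, ht_sum]
  norm_cast
  by_contra hlt
  have h0 : ∑ i, c i = 0 := by omega
  rw [Finset.sum_eq_zero_iff] at h0
  apply D.root_ne_zero α (D.pos_sub hα)
  rw [hc]
  exact Finset.sum_eq_zero fun i hi => by rw [h0 i hi]; simp

lemma simple_of {g : Vn n →ₗ[ℝ] Vn n} {γ : Vn n} {c : Fin n → ℕ} {j : Fin n}
    (hc : γ = ∑ i, (c i : ℝ) • D.sroot i) (hg : g γ = D.sroot j)
    (hpos : ∀ i, c i ≠ 0 → g (D.sroot i) ∈ D.Rplus) : ∃ i, γ = D.sroot i := by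
  have h1 : ∑ i, (c i : ℝ) * D.ht (g (D.sroot i)) = 1 := by
    rw [← D.ht_sroot j, ← hg, hc]
    simp [map_sum]
  have h2 : ((∑ i, c i : ℕ) : ℝ) ≤ 1 := by
    rw [← h1]
    push_cast
    refine Finset.sum_le_sum fun i _ => ?_
    by_cases hci : c i = 0
    · simp [hci]
    · exact le_mul_of_one_le_right (Nat.cast_nonneg _) (D.one_le_ht (hpos i hci))
  have h2' : ∑ i, c i ≤ 1 := by exact_mod_cast h2
  have h3 : ∃ i, c i ≠ 0 := by
    by_contra! hall
    simp [hall] at h1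
  obtain ⟨i, hi⟩ := h3
  refine ⟨i, ?_⟩
  have h4 : c i + ∑ k ∈ Finset.univ.erase i, c k = ∑ k, c k :=
    Finset.add_sum_erase _ _ (Finset.mem_univ i)
  have h5 : c i = 1 := by omega
  have h6 : ∑ k ∈ Finset.univ.erase i, c k = 0 := by omega
  rw [Finset.sum_eq_zero_iff] at h6
  rw [hc, Finset.sum_eq_single i]
  · simp [h5]
  · intro k _ hk
    rw [h6 k (by simp [hk])]
    simp
  · simp

lemma coroot_map {w : Vn n ≃ₗ[ℝ] Vn n} (hw : w ∈ D.Weyl) (α : Vn n) :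
    coroot (w α) = w (coroot α) := by
  unfold coroot
  rw [(D.weyl_props hw).1, map_smul]

lemma coroot_neg (α : Vn n) : coroot (-α) = -coroot α := by
  unfold coroot
  rw [inner_neg_neg, smul_neg]

lemma coroot_decomp {α : Vn n} (hα : α ∈ D.Rplus) : ∃ c : Fin n → ℝ, (∀ i, 0 ≤ c i) ∧
    coroot α = ∑ i, c i • coroot (D.sroot i) := by
  obtain ⟨c, hc⟩ := D.pos_decomp α hα
  have h0 : 0 < (⟪α, α⟫ : ℝ) := real_inner_self_pos.mpr (D.root_ne_zero _ (D.pos_sub hα))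
  refine ⟨fun i => (2 / ⟪α, α⟫) * c i * (⟪D.sroot i, D.sroot i⟫ / 2), fun i => ?_, ?_⟩
  · have := D.sroot_norm_pos i
    positivity
  · have : coroot α = (2 / ⟪α, α⟫ : ℝ) • ∑ i, (c i : ℝ) • D.sroot i := by rw [← hc]; rfl
    rw [this, Finset.smul_sum]
    refine Finset.sum_congr rfl fun i _ => ?_
    have := D.sroot_norm_pos i
    unfold coroot
    rw [smul_smul, smul_smul]
    congr 1
    field_simp

lemma fw_coroot_sum (i : Fin n) (c : Fin n → ℝ) :
    (⟪D.fw i, ∑ j, c j • coroot (D.sroot j)⟫ : ℝ) = c i := by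
  rw [inner_sum]
  simp [real_inner_smul_right, D.fw_pair]

lemma rho_coroot_sum (c : Fin n → ℝ) :
    (⟪D.rho, ∑ j, c j • coroot (D.sroot j)⟫ : ℝ) = ∑ j, c j := by
  rw [inner_sum]
  simp [real_inner_smul_right, D.rho_sroot]

lemma rho_coroot_nonneg {α : Vn n} (hα : α ∈ D.Rplus) : 0 ≤ (⟪D.rho, coroot α⟫ : ℝ) := by
  obtain ⟨c, h0, hc⟩ := D.coroot_decomp hα
  rw [hc, rho_coroot_sum]
  exact Finset.sum_nonneg fun i _ => h0 i

/-- If `w` sends simple root `j` to the negative of a simple root, pairing with `ρ` is `-1`. -/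
lemma rho_neg_simple {w : Vn n ≃ₗ[ℝ] Vn n} (hw : w ∈ D.Weyl) {i j : Fin n}
    (h : -(w (D.sroot j)) = D.sroot i) : (⟪D.rho, w (coroot (D.sroot j))⟫ : ℝ) = -1 := by
  rw [← D.coroot_map hw, ← neg_neg (w (D.sroot j)), h, coroot_neg, inner_neg_right, rho_sroot]

lemma neg_simple {w : Vn n ≃ₗ[ℝ] Vn n} (hw : w ∈ D.Weyl) (S : Fin n → Prop) {j : Fin n}
    {c : Fin n → ℕ} (hc : -(w (D.sroot j)) = ∑ i, (c i : ℝ) • D.sroot i)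
    (hS : ∀ i, c i ≠ 0 → S i)
    (hneg : ∀ i, S i → ∀ α ∈ D.Rplus, w α = D.sroot i → -(w α) ∈ D.Rplus) :
    ∃ i, -(w (D.sroot j)) = D.sroot i := by
  refine D.simple_of (g := -(w.symm : Vn n →ₗ[ℝ] Vn n)) (j := j) hc (by simp) ?_
  intro i hi
  have hm : w.symm (D.sroot i) ∈ D.R := by
    rw [← (D.weyl_props hw).2, w.apply_symm_apply]
    exact D.sroot_mem_R i
  rcases D.pos_or _ hm with h | h
  · have := hneg i (hS i hi) _ h (w.apply_symm_apply _)
    rw [w.apply_symm_apply] at this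
    exact absurd this (D.pos_not_and _ (D.sroot_mem i))
  · simpa using h

end RootSystemData

/-- let `ω_r` be a minuscule fundamental weight, `w₀` the longest element
of `W` (the unique element sending all positive roots to negative ones), `w₀ʳ` the
longest element of the stabilizer of `ω_r` in `W` (the unique element of `W` fixing
`ω_r`, sending the positive roots orthogonal to `ω_r` to negative roots and the
remaining positive roots to positive roots), and `u_r = w₀·w₀ʳ`.  Then
`u_r⁻¹(ρ) = ρ − h·ω_r`; in particular `u_r⁻¹(ρ) ≡ ρ + ω_r (mod (1+h)P)`, so `ρ` and
`ρ + ω_r` lie in the same `W`-orbit of `P/(1+h)P`. -/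
theorem stmt_5 {n : ℕ} (D : RootSystemData n) (r : Fin n) (hr : D.Minuscule r)
    (w0 : Vn n ≃ₗ[ℝ] Vn n) (hw0W : w0 ∈ D.Weyl)
    (hw0 : ∀ α ∈ D.Rplus, -(w0 α) ∈ D.Rplus)
    (w0r : Vn n ≃ₗ[ℝ] Vn n) (hw0rW : w0r ∈ D.Weyl)
    (hw0rfix : w0r (D.fw r) = D.fw r)
    (hw0rneg : ∀ α ∈ D.Rplus, ⟪α, D.fw r⟫ = 0 → -(w0r α) ∈ D.Rplus)
    (hw0rpos : ∀ α ∈ D.Rplus, ⟪α, D.fw r⟫ ≠ 0 → w0r α ∈ D.Rplus) :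
    (w0 * w0r)⁻¹ D.rho = D.rho - D.h • D.fw r ∧
      ∃ p ∈ D.P, (w0 * w0r)⁻¹ D.rho = D.rho + D.fw r + (1 + D.h) • p := by
  have key0 : ∀ x, w0 (w0⁻¹ x) = x := fun x => w0.apply_symm_apply x
  have keyr : ∀ x, w0r (w0r⁻¹ x) = x := fun x => w0r.apply_symm_apply x
  have I0 := (D.weyl_props hw0W).1
  have Ir := (D.weyl_props hw0rW).1
  -- `w0⁻¹ ρ = -ρ`
  have hrho : w0⁻¹ D.rho = -D.rho := by
    apply D.ext_coroot
    intro j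
    obtain ⟨c, hc⟩ := D.pos_decomp _ (hw0 _ (D.sroot_mem j))
    obtain ⟨i, hi⟩ := D.neg_simple hw0W (fun _ => True) hc (fun _ _ => trivial)
      (fun i _ α hα _ => hw0 α hα)
    rw [← I0, key0, D.rho_neg_simple hw0W hi, inner_neg_left, D.rho_sroot]
  have hu : (w0 * w0r)⁻¹ D.rho = -(w0r⁻¹ D.rho) := by
    rw [mul_inv_rev, LinearEquiv.mul_apply, hrho, map_neg]
  -- simple roots other than `r`
  have hne : ∀ j, j ≠ r → (⟪D.rho, w0r (coroot (D.sroot j))⟫ : ℝ) = -1 := by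
    intro j hj
    have hperp : ∀ i, i ≠ r → (⟪D.sroot i, D.fw r⟫ : ℝ) = 0 := fun i hi => by
      rw [real_inner_comm, D.fw_sroot, if_neg (Ne.symm hi)]
    have hp := hw0rneg _ (D.sroot_mem j) (hperp j hj)
    obtain ⟨c, hc⟩ := D.pos_decomp _ hp
    have hcr : c r = 0 := by
      have h1 : (⟪D.fw r, -(w0r (D.sroot j))⟫ : ℝ) = 0 := by
        rw [inner_neg_right]
        nth_rewrite 1 [← hw0rfix]
        rw [Ir, real_inner_comm, hperp j hj, neg_zero]
      rw [hc, inner_sum] at h1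
      simp only [real_inner_smul_right, D.fw_sroot, mul_ite, mul_zero, Finset.sum_ite_eq,
        Finset.mem_univ, if_true] at h1
      have h0 := D.sroot_norm_pos r
      have h2 := (mul_eq_zero.mp h1).resolve_right (by positivity)
      exact_mod_cast h2
    obtain ⟨i, hi⟩ := D.neg_simple hw0rW (fun i => i ≠ r) hc
      (fun i hi h => hi (h ▸ hcr))
      (fun i hi α hα h => hw0rneg α hα (by
        rw [← Ir, h, hw0rfix, hperp i hi]))
    exact D.rho_neg_simple hw0rW hi
  -- the simple root `r` goes to `θ`
  have hrr : (⟪D.rho, w0r (coroot (D.sroot r))⟫ : ℝ) = ⟪D.rho, coroot D.hst⟫ := by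
    apply le_antisymm
    · obtain ⟨c, h0, hc⟩ := D.theta_highest (w0r (D.sroot r))
        (((D.weyl_props hw0rW).2 _).mpr (D.sroot_mem_R r))
      have h1 : (⟪D.rho, coroot D.hst - coroot (w0r (D.sroot r))⟫ : ℝ) = ∑ i, c i := by
        rw [hc, D.rho_coroot_sum]
      rw [inner_sub_right, D.coroot_map hw0rW] at h1
      have := Finset.sum_nonneg fun i (_ : i ∈ Finset.univ) => h0 i
      linarith
    · have hth : (⟪D.fw r, coroot D.hst⟫ : ℝ) = 1 := by
        apply le_antisymm (hr _ D.theta_mem)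
        obtain ⟨c, h0, hc⟩ := D.theta_highest _ (D.sroot_mem_R r)
        have h1 : (⟪D.fw r, coroot D.hst - coroot (D.sroot r)⟫ : ℝ) = c r := by
          rw [hc, D.fw_coroot_sum]
        rw [inner_sub_right, D.fw_pair, if_pos rfl] at h1
        linarith [h0 r]
      set β := w0r⁻¹ D.hst with hβ
      have hwβ : w0r β = D.hst := keyr _
      have hβR : β ∈ D.R := by
        rw [← (D.weyl_props hw0rW).2, hwβ]; exact D.pos_sub D.theta_mem
      have hβ1 : (⟪D.fw r, coroot β⟫ : ℝ) = 1 := by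
        rw [← Ir, hw0rfix, ← D.coroot_map hw0rW, hwβ, hth]
      have hβp : β ∈ D.Rplus := by
        rcases D.pos_or _ hβR with h | h
        · exact h
        · obtain ⟨c, h0, hc⟩ := D.coroot_decomp h
          have h1 : (⟪D.fw r, coroot (-β)⟫ : ℝ) = c r := by rw [hc, D.fw_coroot_sum]
          rw [RootSystemData.coroot_neg, inner_neg_right, hβ1] at h1
          linarith [h0 r]
      obtain ⟨c, h0, hc⟩ := D.coroot_decomp hβp
      have hcr : c r = 1 := by rw [← D.fw_coroot_sum r c, ← hc, hβ1]
      have h2 : (⟪D.rho, coroot D.hst⟫ : ℝ)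
          = ∑ i, c i * ⟪D.rho, w0r (coroot (D.sroot i))⟫ := by
        rw [← hwβ, D.coroot_map hw0rW, hc, map_sum, inner_sum]
        simp [real_inner_smul_right]
      rw [h2, ← Finset.add_sum_erase _ _ (Finset.mem_univ r), hcr, one_mul]
      have h3 : ∑ i ∈ Finset.univ.erase r, c i * (⟪D.rho, w0r (coroot (D.sroot i))⟫ : ℝ) ≤ 0 := by
        refine Finset.sum_nonpos fun i hi => ?_
        rw [hne i (Finset.ne_of_mem_erase hi)]
        linarith [h0 i]
      linarith
  have main : (w0 * w0r)⁻¹ D.rho = D.rho - D.h • D.fw r := by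
    rw [hu]
    apply D.ext_coroot
    intro j
    rw [inner_neg_left, ← Ir, keyr, inner_sub_left, real_inner_smul_left, D.rho_sroot, D.fw_pair]
    by_cases hj : r = j
    · subst hj
      rw [hrr, if_pos rfl]
      unfold RootSystemData.h
      ring
    · rw [hne j (Ne.symm hj), if_neg hj]
      ring
  refine ⟨main, -D.fw r, D.P.neg_mem (Submodule.subset_span ⟨r, rfl⟩), ?_⟩
  rw [main]
  module
end
end

section
/- If w ∈ W satisfies w(ρ) − ρ ∈ (1+h)P, then w = 1. Consequently, the W-orbit of the image of ρ in P/(1+h)P has exactly |W| elements (the orbit is simple, i.e. free). -/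
noncomputable section

open scoped RealInnerProductSpace BigOperators

namespace RSAux

variable {n : ℕ}

lemma self_pos {α : Vn n} (h : α ≠ 0) : 0 < ⟪α, α⟫ := by
  rw [real_inner_self_eq_norm_sq]; positivity

lemma reflVec_invol (α v : Vn n) : reflVec α (reflVec α v) = v := by
  by_cases h : α = 0
  · simp [reflVec, h]
  have h1 := (self_pos h).ne'
  have h2 : 2 * ⟪reflVec α v, α⟫ / ⟪α, α⟫ = - (2 * ⟪v, α⟫ / ⟪α, α⟫) := by
    simp only [reflVec, inner_sub_left, real_inner_smul_left]
    field_simp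
    ring
  have h3 : reflVec α (reflVec α v)
      = reflVec α v - (2 * ⟪reflVec α v, α⟫ / ⟪α, α⟫) • α := rfl
  rw [h3, h2]
  simp [reflVec]

lemma reflVec_inner (α x y : Vn n) : ⟪reflVec α x, reflVec α y⟫ = ⟪x, y⟫ := by
  by_cases h : α = 0
  · simp [reflVec, h]
  have h1 := (self_pos h).ne'
  simp only [reflVec, inner_sub_left, inner_sub_right, real_inner_smul_left,
    real_inner_smul_right]
  rw [real_inner_comm α y]
  field_simp
  ring

/-- the reflection as a linear equivalence -/
def refl (α : Vn n) : Vn n ≃ₗ[ℝ] Vn n :=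
  LinearEquiv.ofInvolutive
    { toFun := reflVec α
      map_add' := by
        intro x y
        simp only [reflVec, inner_add_left, mul_add, add_div, add_smul]
        abel
      map_smul' := by
        intro c x
        simp only [reflVec, real_inner_smul_left, RingHom.id_apply, smul_sub, smul_smul]
        congr 2
        ring }
    (fun v => reflVec_invol α v)

lemma refl_apply (α v : Vn n) : refl α v = reflVec α v := rfl

lemma refl_mul_self (α : Vn n) : refl α * refl α = 1 := by
  ext1 v
  exact reflVec_invol α v

lemma refl_self (α : Vn n) (h : α ≠ 0) : refl α α = -α := by
  have h1 := (self_pos h).ne'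
  rw [refl_apply, reflVec, mul_div_assoc, div_self h1]
  module

lemma refl_neg (α : Vn n) : refl (-α) = refl α := by
  ext1 v
  simp only [refl_apply, reflVec, inner_neg_right, inner_neg_left, neg_neg, smul_neg, sub_neg_eq_add]
  rw [mul_neg, neg_div, neg_smul, sub_eq_add_neg]

lemma conj_refl (w : Vn n ≃ₗ[ℝ] Vn n) (hw : ∀ x y, ⟪w x, w y⟫ = ⟪x, y⟫) (α : Vn n) :
    w * refl α = refl (w α) * w := by
  ext1 v
  simp only [LinearEquiv.mul_apply, refl_apply, reflVec, hw, map_sub, map_smul]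

variable (D : RootSystemData n)

/-- product of simple reflections -/
def wd (L : List (Fin n)) : Vn n ≃ₗ[ℝ] Vn n := (L.map (fun i => refl (D.sroot i))).prod

lemma wd_nil : wd D [] = 1 := rfl
lemma wd_cons (i L) : wd D (i :: L) = refl (D.sroot i) * wd D L := by simp [wd]
lemma wd_append (L L') : wd D (L ++ L') = wd D L * wd D L' := by simp [wd]

lemma sne (i : Fin n) : D.sroot i ≠ 0 := D.root_ne_zero _ (D.pos_sub (D.sroot_mem i))

lemma neg_mem {α} (h : α ∈ D.R) : -α ∈ D.R := by
  rw [← refl_self α (D.root_ne_zero _ h)]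
  exact D.reflect_mem α h α h

lemma wd_inner (L) (x y : Vn n) : ⟪wd D L x, wd D L y⟫ = ⟪x, y⟫ := by
  induction L with
  | nil => rfl
  | cons i L ih =>
    rw [wd_cons, LinearEquiv.mul_apply, LinearEquiv.mul_apply, refl_apply, refl_apply,
      reflVec_inner, ih]

lemma wd_mem (L) {α} (h : α ∈ D.R) : wd D L α ∈ D.R := by
  induction L with
  | nil => exact h
  | cons i L ih =>
    rw [wd_cons]
    exact D.reflect_mem _ (D.pos_sub (D.sroot_mem i)) _ ih

lemma fw_sroot (k j : Fin n) :
    ⟪D.fw k, D.sroot j⟫ = if k = j then ⟪D.sroot j, D.sroot j⟫ / 2 else 0 := by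
  have h := D.fw_pair k j
  have h1 := (self_pos (sne D j)).ne'
  rw [coroot, real_inner_smul_right] at h
  split_ifs at h ⊢
  · field_simp at h
    linarith
  · simpa [h1, sne D j] using h

lemma fw_nonneg (k : Fin n) {α} (h : α ∈ D.Rplus) : 0 ≤ ⟪D.fw k, α⟫ := by
  obtain ⟨c, hc⟩ := D.pos_decomp α h
  rw [hc, inner_sum]
  refine Finset.sum_nonneg fun i _ => ?_
  rw [real_inner_smul_right, fw_sroot]
  have := self_pos (sne D i)
  split_ifs <;> positivity

lemma decomp {α} (h : α ∈ D.Rplus) :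
    α = ∑ i, (2 * ⟪D.fw i, α⟫ / ⟪D.sroot i, D.sroot i⟫) • D.sroot i := by
  obtain ⟨c, hc⟩ := D.pos_decomp α h
  conv_lhs => rw [hc]
  refine Finset.sum_congr rfl fun i _ => ?_
  congr 1
  have h1 := (self_pos (sne D i)).ne'
  have : ⟪D.fw i, α⟫ = c i * (⟪D.sroot i, D.sroot i⟫ / 2) := by
    rw [hc, inner_sum]
    simp [real_inner_smul_right, fw_sroot]
  rw [this]
  field_simp

lemma rho_inner (v : Vn n) : ⟪D.rho, v⟫ = ∑ k, ⟪D.fw k, v⟫ := by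
  rw [RootSystemData.rho, sum_inner]

lemma rho_pos {α} (h : α ∈ D.Rplus) : 0 < ⟪D.rho, α⟫ := by
  rw [rho_inner]
  refine (Finset.sum_nonneg fun k _ => fw_nonneg D k h).lt_of_ne fun h0 => ?_
  rw [eq_comm, Finset.sum_eq_zero_iff_of_nonneg (fun k _ => fw_nonneg D k h)] at h0
  apply D.root_ne_zero α (D.pos_sub h)
  rw [decomp D h]
  refine Finset.sum_eq_zero fun i hi => ?_
  rw [h0 i hi]; simp

lemma mem_pos {α} (h : α ∈ D.R) (h' : 0 < ⟪D.rho, α⟫) : α ∈ D.Rplus := by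
  rcases D.pos_or α h with h1 | h1
  · exact h1
  · have := rho_pos D h1
    rw [inner_neg_right] at this
    linarith

lemma simple_perm (i : Fin n) {α} (h : α ∈ D.Rplus) (hne : α ≠ D.sroot i) :
    refl (D.sroot i) α ∈ D.Rplus := by
  have hR : refl (D.sroot i) α ∈ D.R :=
    D.reflect_mem _ (D.pos_sub (D.sroot_mem i)) _ (D.pos_sub h)
  have hex : ∃ k, k ≠ i ∧ ⟪D.fw k, α⟫ ≠ 0 := by
    by_contra! hc
    have hd := decomp D h
    rw [Finset.sum_eq_single i (fun k _ hk => by rw [hc k hk]; simp) (by simp)] at hd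
    set c := 2 * ⟪D.fw i, α⟫ / ⟪D.sroot i, D.sroot i⟫ with hcdef
    have hc0 : 0 ≤ c := by
      have := fw_nonneg D i h
      have := self_pos (sne D i)
      positivity
    have hm := D.pos_sub h
    rw [hd] at hm
    rcases D.reduced _ (D.pos_sub (D.sroot_mem i)) c hm with h1 | h1
    · rw [h1, one_smul] at hd; exact hne hd
    · linarith
  obtain ⟨k, hk, hk0⟩ := hex
  have hpos : 0 < ⟪D.fw k, α⟫ := (fw_nonneg D k h).lt_of_ne' hk0
  have hkk : ⟪D.fw k, refl (D.sroot i) α⟫ = ⟪D.fw k, α⟫ := by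
    rw [refl_apply, reflVec, inner_sub_right, real_inner_smul_right, fw_sroot, if_neg hk]
    simp
  rcases D.pos_or _ hR with h1 | h1
  · exact h1
  · have := fw_nonneg D k h1
    rw [inner_neg_right, hkk] at this
    linarith

lemma exchange (i : Fin n) (L : List (Fin n)) (h : ⟪D.rho, wd D L (D.sroot i)⟫ < 0) :
    ∃ L' : List (Fin n), L'.length + 1 = L.length ∧ wd D L * refl (D.sroot i) = wd D L' := by
  induction L with
  | nil =>
    have := rho_pos D (D.sroot_mem i)
    rw [wd_nil] at h
    change ⟪D.rho, D.sroot i⟫ < 0 at h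
    linarith
  | cons j L ih =>
    by_cases h1 : ⟪D.rho, wd D L (D.sroot i)⟫ < 0
    · obtain ⟨L', hl, he⟩ := ih h1
      exact ⟨j :: L', by simp [hl], by rw [wd_cons, wd_cons, mul_assoc, he]⟩
    · have hR := wd_mem D L (D.pos_sub (D.sroot_mem i))
      have hP : wd D L (D.sroot i) ∈ D.Rplus := by
        rcases D.pos_or _ hR with h2 | h2
        · exact h2
        · have := rho_pos D h2
          rw [inner_neg_right] at this
          linarith
      have he : wd D L (D.sroot i) = D.sroot j := by
        by_contra hne
        have := rho_pos D (simple_perm D j hP hne)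
        rw [wd_cons, LinearEquiv.mul_apply] at h
        linarith
      refine ⟨L, by simp, ?_⟩
      have hc := conj_refl (wd D L) (wd_inner D L) (D.sroot i)
      rw [he] at hc
      rw [wd_cons, mul_assoc, hc, ← mul_assoc, refl_mul_self, one_mul]

lemma free_wd (m : ℕ) : ∀ L : List (Fin n), L.length = m → wd D L D.rho = D.rho → wd D L = 1 := by
  induction m using Nat.strong_induction_on with
  | _ m ih =>
    intro L hL hfix
    rcases List.eq_nil_or_concat L with rfl | ⟨L1, i, rfl⟩
    · rfl
    · have hw : wd D (L1 ++ [i]) = wd D L1 * refl (D.sroot i) := by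
        rw [wd_append, wd_cons, wd_nil, mul_one]
      have hneg : ⟪D.rho, wd D L1 (D.sroot i)⟫ < 0 := by
        have h1 : ⟪D.rho, wd D (L1 ++ [i]) (D.sroot i)⟫ = ⟪D.rho, D.sroot i⟫ := by
          conv_lhs => rw [← hfix]
          simp only [List.concat_eq_append, wd_inner]
        rw [hw, LinearEquiv.mul_apply, refl_self _ (sne D i), map_neg, inner_neg_right] at h1
        have := rho_pos D (D.sroot_mem i)
        linarith
      obtain ⟨L', hl, he⟩ := exchange D i L1 hneg
      rw [List.concat_eq_append] at *
      rw [hw, he] at hfix ⊢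
      refine ih L'.length ?_ L' rfl hfix
      simp at hL
      omega

lemma pos_refl {α} (h : α ∈ D.Rplus) : ∃ L, refl α = wd D L := by
  classical
  by_contra hcon
  set S := D.Rplus.filter (fun α => ¬ ∃ L, refl α = wd D L) with hS
  obtain ⟨β, hβ, hmin⟩ := S.exists_min_image (fun a => ⟪D.rho, a⟫) ⟨α, Finset.mem_filter.mpr ⟨h, hcon⟩⟩
  simp only [hS, Finset.mem_filter] at hβ hmin
  obtain ⟨hβ, hno⟩ := hβ
  have hnes : ∀ i, β ≠ D.sroot i := by
    rintro i rfl
    exact hno ⟨[i], by rw [wd_cons, wd_nil, mul_one]⟩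
  have hex : ∃ i, 0 < ⟪β, D.sroot i⟫ := by
    by_contra! hc
    have h0 := self_pos (D.root_ne_zero β (D.pos_sub hβ))
    obtain ⟨c, hc'⟩ := D.pos_decomp β hβ
    have : ⟪β, β⟫ = ∑ i, (c i : ℝ) * ⟪β, D.sroot i⟫ := by
      conv_lhs => rw [hc', inner_sum]
      simp only [real_inner_smul_right, ← hc']
    have h2 : ∑ i, (c i : ℝ) * ⟪β, D.sroot i⟫ ≤ 0 :=
      Finset.sum_nonpos fun i _ => mul_nonpos_of_nonneg_of_nonpos (by positivity) (hc i)
    linarith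
  obtain ⟨i, hi⟩ := hex
  have hγ := simple_perm D i hβ (hnes i)
  have hlt : ⟪D.rho, refl (D.sroot i) β⟫ < ⟪D.rho, β⟫ := by
    rw [refl_apply, reflVec, inner_sub_right, real_inner_smul_right]
    have := rho_pos D (D.sroot_mem i)
    have := self_pos (sne D i)
    have : 0 < 2 * ⟪β, D.sroot i⟫ / ⟪D.sroot i, D.sroot i⟫ * ⟪D.rho, D.sroot i⟫ := by positivity
    linarith
  by_cases hg : ∃ L, refl (refl (D.sroot i) β) = wd D L
  · obtain ⟨L, hL⟩ := hg
    apply hno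
    refine ⟨i :: (L ++ [i]), ?_⟩
    rw [wd_cons, wd_append, wd_cons, wd_nil, mul_one, ← hL,
      ← conj_refl (refl (D.sroot i)) (fun x y => reflVec_inner _ x y), ← mul_assoc,
      refl_mul_self, one_mul]
  · have := hmin _ ⟨hγ, hg⟩
    linarith

lemma wd_inv (L) : ∃ L', (wd D L)⁻¹ = wd D L' := by
  induction L with
  | nil => exact ⟨[], by simp [wd_nil]⟩
  | cons i L ih =>
    obtain ⟨L', h⟩ := ih
    refine ⟨L' ++ [i], ?_⟩
    rw [wd_cons, mul_inv_rev, h, wd_append, wd_cons, wd_nil, mul_one,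
      inv_eq_of_mul_eq_one_right (refl_mul_self (D.sroot i))]

lemma weyl_wd {w} (hw : w ∈ D.Weyl) : ∃ L, w = wd D L := by
  refine Subgroup.closure_induction (p := fun w _ => ∃ L, w = wd D L) ?_ ⟨[], rfl⟩ ?_ ?_ hw
  · rintro w ⟨α, hα, h⟩
    have : w = refl α := by ext1 v; exact h v
    rw [this]
    rcases D.pos_or α hα with h1 | h1
    · exact pos_refl D h1
    · rw [← refl_neg]; exact pos_refl D h1
  · rintro _ _ _ _ ⟨L, rfl⟩ ⟨L', rfl⟩
    exact ⟨L ++ L', (wd_append D L L').symm⟩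
  · rintro _ _ ⟨L, rfl⟩
    exact wd_inv D L

lemma eq_zero_of_orth {v : Vn n} (h : ∀ j, ⟪v, D.sroot j⟫ = 0) : v = 0 := by
  have hp : ∀ α ∈ D.Rplus, ⟪v, α⟫ = 0 := by
    intro α hα
    rw [decomp D hα, inner_sum]
    exact Finset.sum_eq_zero fun i _ => by rw [real_inner_smul_right, h, mul_zero]
  have hR : ∀ α ∈ D.R, ⟪v, α⟫ = 0 := by
    intro α hα
    rcases D.pos_or α hα with h1 | h1
    · exact hp _ h1
    · have := hp _ h1
      rwa [inner_neg_right, neg_eq_zero] at this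
  have hs : v ∈ Submodule.span ℝ (D.R : Set (Vn n)) := by rw [D.span_top]; trivial
  have : ∀ x ∈ Submodule.span ℝ (D.R : Set (Vn n)), ⟪v, x⟫ = 0 := by
    intro x hx
    induction hx using Submodule.span_induction with
    | mem x hx => exact hR x hx
    | zero => simp
    | add x y _ _ hx hy => rw [inner_add_right, hx, hy, add_zero]
    | smul c x _ hx => rw [real_inner_smul_right, hx, mul_zero]
  exact inner_self_eq_zero.mp (this v hs)

lemma inner_coroot (v α : Vn n) : ⟪v, coroot α⟫ = 2 * ⟪v, α⟫ / ⟪α, α⟫ := by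
  rw [coroot, real_inner_smul_right]; ring

lemma orth_coroot {v : Vn n} (h : ∀ j, ⟪v, coroot (D.sroot j)⟫ = 0) : v = 0 := by
  refine eq_zero_of_orth D fun j => ?_
  have := h j
  have h1 := (self_pos (sne D j)).ne'
  rw [inner_coroot, div_eq_zero_iff] at this
  rcases this with h | h
  · linarith
  · exact absurd h h1

lemma P_int {p} (hp : p ∈ D.P) (j : Fin n) : ∃ z : ℤ, ⟪p, coroot (D.sroot j)⟫ = z := by
  induction hp using Submodule.span_induction with
  | mem x hx =>
    obtain ⟨i, rfl⟩ := hx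
    rw [D.fw_pair]
    exact ⟨if i = j then 1 else 0, by split_ifs <;> simp⟩
  | zero => exact ⟨0, by simp⟩
  | add x y _ _ hx hy =>
    obtain ⟨a, ha⟩ := hx
    obtain ⟨b, hb⟩ := hy
    exact ⟨a + b, by rw [inner_add_left, ha, hb]; push_cast; rfl⟩
  | smul c x _ hx =>
    obtain ⟨a, ha⟩ := hx
    refine ⟨c * a, ?_⟩
    rw [← Int.cast_smul_eq_zsmul ℝ, real_inner_smul_left, ha]
    push_cast; rfl

lemma int_P {v : Vn n} (h : ∀ j, ∃ z : ℤ, ⟪v, coroot (D.sroot j)⟫ = z) : v ∈ D.P := by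
  choose z hz using h
  have : v = ∑ i, z i • D.fw i := by
    rw [← sub_eq_zero]
    refine orth_coroot D fun j => ?_
    rw [inner_sub_left, sum_inner, hz]
    simp only [← Int.cast_smul_eq_zsmul ℝ, real_inner_smul_left, D.fw_pair]
    simp
  rw [this]
  exact Submodule.sum_mem _ fun i _ =>
    Submodule.smul_mem _ _ (Submodule.subset_span ⟨i, rfl⟩)

lemma sroot_P (i : Fin n) : D.sroot i ∈ D.P := by
  refine int_P D fun j => ?_
  rw [inner_coroot]
  exact D.crystallographic _ (D.pos_sub (D.sroot_mem j)) _ (D.pos_sub (D.sroot_mem i))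

lemma wd_P (L) {p} (hp : p ∈ D.P) : wd D L p ∈ D.P := by
  induction L with
  | nil => exact hp
  | cons i L ih =>
    rw [wd_cons, LinearEquiv.mul_apply, refl_apply, reflVec, ← inner_coroot]
    obtain ⟨z, hz⟩ := P_int D ih i
    rw [hz, Int.cast_smul_eq_zsmul]
    exact Submodule.sub_mem _ ih (Submodule.smul_mem _ _ (sroot_P D i))

lemma rho_simple (j : Fin n) : ⟪D.rho, coroot (D.sroot j)⟫ = 1 := by
  rw [rho_inner]; simp [D.fw_pair]

lemma rho_le {α} (h : α ∈ D.R) : ⟪D.rho, coroot α⟫ ≤ D.h - 1 := by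
  obtain ⟨c, hc, he⟩ := D.theta_highest α h
  have h1 := congrArg (fun x => ⟪D.rho, x⟫) he
  simp only [inner_sub_right, inner_sum, real_inner_smul_right, rho_simple, mul_one] at h1
  have := Finset.sum_nonneg fun i (_ : i ∈ Finset.univ) => hc i
  rw [RootSystemData.h]
  linarith

lemma rho_ge {α} (h : α ∈ D.R) : -(D.h - 1) ≤ ⟪D.rho, coroot α⟫ := by
  have := rho_le D (neg_mem D h)
  rw [inner_coroot, inner_neg_right, inner_neg_neg] at this
  rw [inner_coroot]
  have h2 : 2 * -⟪D.rho, α⟫ / ⟪α, α⟫ = -(2 * ⟪D.rho, α⟫ / ⟪α, α⟫) := by ring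
  linarith

lemma main1 (L) (h : ∃ p ∈ D.P, wd D L D.rho - D.rho = (1 + D.h) • p) : wd D L = 1 := by
  obtain ⟨p, hp, he⟩ := h
  refine free_wd D _ L rfl ?_
  rw [← sub_eq_zero]
  refine orth_coroot D fun j => ?_
  obtain ⟨z, hz⟩ := P_int D hp j
  obtain ⟨L', hL'⟩ := wd_inv D L
  have hj := D.pos_sub (D.sroot_mem j)
  have hw : ⟪wd D L D.rho, coroot (D.sroot j)⟫ = ⟪D.rho, coroot (wd D L' (D.sroot j))⟫ := by
    have h1 : wd D L' (wd D L D.rho) = D.rho := by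
      rw [← LinearEquiv.mul_apply, ← hL', inv_mul_cancel]; rfl
    rw [inner_coroot, inner_coroot, wd_inner]
    conv_rhs => rw [← h1, wd_inner]
  have hle := rho_le D (wd_mem D L' hj)
  have hge := rho_ge D (wd_mem D L' hj)
  have h1 := rho_le D hj
  rw [rho_simple] at h1
  have hv : ⟪wd D L D.rho - D.rho, coroot (D.sroot j)⟫ = (1 + D.h) * z := by
    rw [he, real_inner_smul_left, hz]
  have hv2 := hv
  rw [inner_sub_left, hw, rho_simple] at hv2
  have hz1 : (z : ℝ) < 1 := by nlinarith
  have hz2 : (-1 : ℝ) < z := by nlinarith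
  have : z = 0 := by
    have a : z < 1 := by exact_mod_cast hz1
    have b : -1 < z := by exact_mod_cast hz2
    omega
  rw [hv, this]; simp

end RSAux

/-- if `w ∈ W` satisfies `w(ρ) − ρ ∈ (1+h)P`, then `w = 1`.  Consequently
the `W`-orbit of the image of `ρ` in `P/(1+h)P` is free (distinct elements of `W` move
`ρ` to distinct classes), i.e. it has exactly `|W|` elements. -/
theorem stmt_8 {n : ℕ} (D : RootSystemData n) :
    (∀ w ∈ D.Weyl, (∃ p ∈ D.P, w D.rho - D.rho = (1 + D.h) • p) → w = 1) ∧
      ∀ w ∈ D.Weyl, ∀ w' ∈ D.Weyl,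
        (∃ p ∈ D.P, w D.rho - w' D.rho = (1 + D.h) • p) → w = w' := by
  constructor
  · intro w hw h
    obtain ⟨L, rfl⟩ := RSAux.weyl_wd D hw
    exact RSAux.main1 D L h
  · rintro w hw w' hw' ⟨p, hp, he⟩
    obtain ⟨L, rfl⟩ := RSAux.weyl_wd D hw
    obtain ⟨L', rfl⟩ := RSAux.weyl_wd D hw'
    obtain ⟨M, hM⟩ := RSAux.wd_inv D L'
    have h1 : RSAux.wd D (M ++ L) = 1 := by
      refine RSAux.main1 D _ ⟨RSAux.wd D M p, RSAux.wd_P D M hp, ?_⟩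
      rw [← map_smul, ← he, map_sub, RSAux.wd_append, LinearEquiv.mul_apply]
      congr 1
      rw [← LinearEquiv.mul_apply, ← hM, inv_mul_cancel]
      rfl
    rw [RSAux.wd_append, ← hM] at h1
    exact (inv_mul_eq_one.mp h1).symm
end
end
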